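/- arXiv:2312.14323 — 6 statements merged into one kernel-verified Lean document; each statement's English description precedes it below -/
import Mathlib

section
/- Let n ≥ 0 be an integer, let k be an integer and let k₀, k₁, …, k_n be nonzero integers. Then |∫_{−π}^{π} [sin(kβ/2)/(2 sin(β/2))] · Π_{j=0}^{n} [sin(k_jβ/2)/(k_j sin(β/2))] dβ| ≤ 4. (The integrand extends continuously to β = 0 since each factor sin(mβ/2)/sin(β/2) is bounded by |m|.) -/
open MeasureTheory

noncomputable def gI1 (m : ℤ) (β : ℝ) : ℝ := Real.sin (m * β / 2) / (2 * Real.sin (β / 2))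

theorem gI1_step (m : ℤ) (β : ℝ) (h : Real.sin (β / 2) ≠ 0) :
    gI1 (m + 2) β = gI1 m β + Real.cos ((m + 1) * β / 2) := by
  unfold gI1
  have h1 : ((m + 2 : ℤ) : ℝ) * β / 2 = (m + 1) * β / 2 + β / 2 := by push_cast; ring
  have h2 : (m : ℝ) * β / 2 = (m + 1) * β / 2 - β / 2 := by ring
  rw [h1, h2, Real.sin_add, Real.sin_sub]
  field_simp
  ring

theorem sin_half_ne (β : ℝ) (h : β ∈ Set.uIoc (-Real.pi) Real.pi) (h0 : β ≠ 0) :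
    Real.sin (β / 2) ≠ 0 := by
  have hp := Real.pi_pos
  rw [Set.uIoc_of_le (by linarith)] at h
  rcases lt_or_gt_of_ne h0 with h1 | h1
  · exact (Real.sin_neg_of_neg_of_neg_pi_lt (by linarith) (by linarith [h.1])).ne
  · exact (Real.sin_pos_of_pos_of_lt_pi (by linarith) (by linarith [h.2])).ne'

theorem ae_ne_zero : ∀ᵐ β : ℝ, β ≠ 0 := by
  simp [ae_iff]

theorem gI1_ae (m : ℤ) : ∀ᵐ β : ℝ, β ∈ Set.uIoc (-Real.pi) Real.pi →
    gI1 (m + 2) β = gI1 m β + Real.cos ((m + 1) * β / 2) := by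
  filter_upwards [ae_ne_zero] with β h0 h
  exact gI1_step m β (sin_half_ne β h h0)

theorem gI1_int_step (m : ℤ) (h : IntervalIntegrable (gI1 m) volume (-Real.pi) Real.pi) :
    IntervalIntegrable (gI1 (m + 2)) volume (-Real.pi) Real.pi := by
  have hc : IntervalIntegrable (fun β : ℝ => Real.cos ((m + 1) * β / 2)) volume
      (-Real.pi) Real.pi := Continuous.intervalIntegrable (by fun_prop) _ _
  refine (h.add hc).congr_ae ?_
  refine (ae_restrict_iff' measurableSet_uIoc).2 ?_
  filter_upwards [gI1_ae m] with β hb h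
  exact (hb h).symm

theorem gI1_one : ∀ᵐ β : ℝ, β ∈ Set.uIoc (-Real.pi) Real.pi → gI1 1 β = 1 / 2 := by
  filter_upwards [ae_ne_zero] with β h0 h
  have := sin_half_ne β h h0
  unfold gI1
  simp only [Int.cast_one, one_mul]
  field_simp

theorem gI1_zero : gI1 0 = fun _ => 0 := by
  funext β; simp [gI1]

theorem gI1_int_nat : ∀ m : ℕ, IntervalIntegrable (gI1 m) volume (-Real.pi) Real.pi
  | 0 => by simp [gI1_zero]
  | 1 => by
    have hc : IntervalIntegrable (fun _ : ℝ => (1 / 2 : ℝ)) volume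
      (-Real.pi) Real.pi := Continuous.intervalIntegrable (by fun_prop) _ _
    refine hc.congr_ae ?_
    refine (ae_restrict_iff' measurableSet_uIoc).2 ?_
    filter_upwards [gI1_one] with β hb h
    exact (hb h).symm
  | m + 2 => by
    have := gI1_int_step m (gI1_int_nat m)
    exact_mod_cast this

noncomputable def JI1 (m : ℤ) : ℝ := ∫ β in (-Real.pi)..Real.pi, gI1 m β

theorem JI1_step (m : ℕ) :
    JI1 ((m + 2 : ℕ) : ℤ) = JI1 m + 4 / (m + 1) * Real.sin ((m + 1) * Real.pi / 2) := by
  have hc : IntervalIntegrable (fun β : ℝ => Real.cos (((m : ℤ) + 1) * β / 2)) volume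
      (-Real.pi) Real.pi := Continuous.intervalIntegrable (by fun_prop) _ _
  unfold JI1
  push_cast
  rw [intervalIntegral.integral_congr_ae (gI1_ae m),
    intervalIntegral.integral_add (gI1_int_nat m) hc]
  congr 1
  have hm : ((m : ℝ) + 1) ≠ 0 := by positivity
  have : ∀ β : ℝ, (((m : ℤ) : ℝ) + 1) * β / 2 = ((m + 1) / 2 : ℝ) * β := by
    intro β; push_cast; ring
  simp only [this]
  rw [intervalIntegral.integral_comp_mul_left (fun x => Real.cos x) (by positivity),
    integral_cos]
  rw [mul_neg, Real.sin_neg, show ((m : ℝ) + 1) * Real.pi / 2 = (m + 1) / 2 * Real.pi by ring,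
    smul_eq_mul]
  field_simp
  ring

theorem JI1_odd (i : ℕ) : JI1 ((2 * i + 1 : ℕ) : ℤ) = Real.pi := by
  induction i with
  | zero =>
    unfold JI1
    simp only [mul_zero, zero_add, Nat.cast_one]
    rw [intervalIntegral.integral_congr_ae gI1_one]
    simp
    ring
  | succ i ih =>
    rw [show 2 * (i + 1) + 1 = (2 * i + 1) + 2 by ring, JI1_step, ih]
    rw [show (((2 * i + 1 : ℕ) : ℝ) + 1) * Real.pi / 2 = ((i + 1 : ℕ) : ℝ) * Real.pi by
      push_cast; ring, Real.sin_nat_mul_pi]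
    simp

theorem sinA (i : ℕ) : Real.sin ((((4 * i : ℕ) : ℝ) + 1) * Real.pi / 2) = 1 := by
  rw [show (((4 * i : ℕ) : ℝ) + 1) * Real.pi / 2 = Real.pi / 2 + i * (2 * Real.pi) by
    push_cast; ring, Real.sin_add_nat_mul_two_pi, Real.sin_pi_div_two]

theorem sinB (i : ℕ) : Real.sin ((((4 * i + 2 : ℕ) : ℝ) + 1) * Real.pi / 2) = -1 := by
  rw [show (((4 * i + 2 : ℕ) : ℝ) + 1) * Real.pi / 2
      = Real.pi / 2 + Real.pi + i * (2 * Real.pi) by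
    push_cast; ring, Real.sin_add_nat_mul_two_pi, Real.sin_add_pi, Real.sin_pi_div_two]

theorem JI1_even (i : ℕ) : 0 ≤ JI1 ((4 * i : ℕ) : ℤ) ∧
    JI1 ((4 * i : ℕ) : ℤ) ≤ JI1 ((4 * i + 2 : ℕ) : ℤ) ∧ JI1 ((4 * i + 2 : ℕ) : ℤ) ≤ 4 := by
  induction i with
  | zero =>
    have h0 : JI1 ((4 * 0 : ℕ) : ℤ) = 0 := by simp [JI1, gI1_zero]
    have h2 := JI1_step (4 * 0)
    rw [sinA, h0] at h2
    rw [h2, h0]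
    norm_num
  | succ i ih =>
    obtain ⟨h1, h2, h3⟩ := ih
    have e1 := JI1_step (4 * i)
    have e2 := JI1_step (4 * i + 2)
    have e3 := JI1_step (4 * (i + 1))
    rw [sinA] at e1 e3
    rw [sinB] at e2
    rw [show 4 * i + 2 + 2 = 4 * (i + 1) by ring] at e2
    push_cast at e1 e2 e3 h1 h2 h3 ⊢
    have a1 : (4 : ℝ) / (4 * i + 2 + 1) ≤ 4 / (4 * i + 1) := by gcongr; linarith
    have a2 : (4 : ℝ) / (4 * (i + 1) + 1) ≤ 4 / (4 * i + 2 + 1) := by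
      apply div_le_div_of_nonneg_left (by norm_num) (by positivity); linarith
    have a3 : (0 : ℝ) ≤ 4 / (4 * (i + 1) + 1) := by positivity
    refine ⟨?_, ?_, ?_⟩ <;> linarith

theorem JI1_nat (m : ℕ) : |JI1 m| ≤ 4 := by
  have hp := Real.pi_pos
  have hp4 := Real.pi_le_four
  have : (∃ i, m = 2 * i + 1) ∨ (∃ i, m = 4 * i) ∨ (∃ i, m = 4 * i + 2) := by
    have : m % 4 < 4 := Nat.mod_lt _ (by norm_num)
    rcases Nat.even_or_odd' m with ⟨c, h | h⟩
    · right
      rcases Nat.even_or_odd' c with ⟨d, h' | h'⟩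
      · left; exact ⟨d, by omega⟩
      · right; exact ⟨d, by omega⟩
    · left; exact ⟨c, h⟩
  rcases this with ⟨i, rfl⟩ | ⟨i, rfl⟩ | ⟨i, rfl⟩
  · rw [JI1_odd, abs_of_pos hp]; exact hp4
  · obtain ⟨h1, h2, h3⟩ := JI1_even i
    rw [abs_le]; constructor <;> linarith
  · obtain ⟨h1, h2, h3⟩ := JI1_even i
    rw [abs_le]; constructor <;> linarith

theorem gI1_neg (m : ℤ) : gI1 (-m) = fun β => - gI1 m β := by
  funext β
  unfold gI1
  rw [show ((-m : ℤ) : ℝ) * β / 2 = -(m * β / 2) by push_cast; ring, Real.sin_neg, neg_div]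

theorem gI1_base (m : ℤ) : IntervalIntegrable (gI1 m) volume (-Real.pi) Real.pi ∧
    |∫ β in (-Real.pi)..Real.pi, gI1 m β| ≤ 4 := by
  rcases Int.eq_nat_or_neg m with ⟨a, rfl | rfl⟩
  · exact ⟨gI1_int_nat a, JI1_nat a⟩
  · rw [gI1_neg]
    refine ⟨(gI1_int_nat a).neg, ?_⟩
    rw [intervalIntegral.integral_neg, abs_neg]
    exact JI1_nat a

theorem sin_sum (a : ℕ) (x t : ℝ) :
    Real.sin x * Real.sin (a * t) =
      (∑ l ∈ Finset.range a, Real.sin (x + (2 * l - a + 1) * t)) * Real.sin t := by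
  have key : ∀ b : ℕ, (∑ l ∈ Finset.range b, Real.sin (x + (2 * l - a + 1) * t)) * Real.sin t
      = (Real.cos (x - a * t) - Real.cos (x + (2 * b - a) * t)) / 2 := by
    intro b
    induction b with
    | zero => simp [sub_eq_add_neg]
    | succ b ih =>
      rw [Finset.sum_range_succ, add_mul, ih]
      rw [show x + (2 * ((b + 1 : ℕ) : ℝ) - a) * t = (x + (2 * b - a + 1) * t) + t by
        push_cast; ring,
        show x + (2 * (b : ℝ) - a) * t = (x + (2 * b - a + 1) * t) - t by ring,
        Real.cos_add _ t, Real.cos_sub _ t]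
      ring
  rw [key, show x + (2 * (a : ℝ) - a) * t = x + a * t by ring, Real.cos_add, Real.cos_sub]
  ring

theorem gI1_mul (k : ℤ) (a : ℕ) (β : ℝ) :
    gI1 k β * (Real.sin (a * β / 2) / (a * Real.sin (β / 2))) =
      (a : ℝ)⁻¹ * ∑ l ∈ Finset.range a, gI1 (k + (2 * l - a + 1)) β := by
  by_cases h : Real.sin (β / 2) = 0
  · simp [gI1, h]
  have := sin_sum a (k * β / 2) (β / 2)
  unfold gI1
  rw [← Finset.sum_div]
  have e : ∀ l : ℕ, ((k + (2 * l - a + 1) : ℤ) : ℝ) * β / 2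
      = k * β / 2 + (2 * l - a + 1) * (β / 2) := by
    intro l; push_cast; ring
  simp only [e]
  rw [div_mul_div_comm, mul_div_assoc (a : ℝ) β 2, this]
  field_simp

theorem fac_abs (m : ℤ) (β : ℝ) : Real.sin (m * β / 2) / (m * Real.sin (β / 2)) =
    Real.sin (m.natAbs * β / 2) / (m.natAbs * Real.sin (β / 2)) := by
  rcases Int.eq_nat_or_neg m with ⟨a, rfl | rfl⟩
  · simp
  · rw [Int.natAbs_neg, Int.natAbs_natCast]
    rw [show ((-(a : ℤ) : ℤ) : ℝ) * β / 2 = -(a * β / 2) by push_cast; ring, Real.sin_neg]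
    push_cast
    rw [neg_mul, neg_div_neg_eq]

theorem main_I1 (n : ℕ) : ∀ (ks : Fin n → ℤ), (∀ j, ks j ≠ 0) → ∀ k : ℤ,
    IntervalIntegrable (fun β => gI1 k β *
      ∏ j : Fin n, Real.sin (ks j * β / 2) / (ks j * Real.sin (β / 2))) volume
      (-Real.pi) Real.pi ∧
    |∫ β in (-Real.pi)..Real.pi, gI1 k β *
      ∏ j : Fin n, Real.sin (ks j * β / 2) / (ks j * Real.sin (β / 2))| ≤ 4 := by
  induction n with
  | zero => intro ks _ k; simpa using gI1_base k
  | succ n ih =>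
    intro ks hks k
    have ih' := ih (fun j => ks j.succ) (fun j => hks _)
    have ha : 0 < (ks 0).natAbs := Int.natAbs_pos.2 (hks 0)
    set a := (ks 0).natAbs with hadef
    have e : (fun β : ℝ => gI1 k β *
        ∏ j : Fin (n + 1), Real.sin (ks j * β / 2) / (ks j * Real.sin (β / 2))) =
        fun β => (a : ℝ)⁻¹ * ∑ l ∈ Finset.range a, gI1 (k + (2 * l - a + 1)) β *
          ∏ j : Fin n, Real.sin (ks j.succ * β / 2) / (ks j.succ * Real.sin (β / 2)) := by
      funext β
      rw [Fin.prod_univ_succ, ← mul_assoc, fac_abs (ks 0), ← hadef, gI1_mul, ← Finset.sum_mul,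
        mul_assoc]
    rw [e]
    constructor
    · apply IntervalIntegrable.const_mul
      have := IntervalIntegrable.sum (Finset.range a)
        (fun (l : ℕ) _ => (ih' (k + (2 * l - a + 1))).1)
      have e2 : ∀ F : ℕ → ℝ → ℝ, (fun β => ∑ l ∈ Finset.range a, F l β) =
          ∑ l ∈ Finset.range a, F l := by
        intro F; funext β; simp
      rw [e2]
      exact this
    · rw [intervalIntegral.integral_const_mul,
        intervalIntegral.integral_finsetSum (fun (l : ℕ) _ => (ih' (k + (2 * l - a + 1))).1),
        abs_mul, abs_of_nonneg (by positivity)]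
      have : |∑ l ∈ Finset.range a, ∫ β in (-Real.pi)..Real.pi, gI1 (k + (2 * l - a + 1)) β *
          ∏ j : Fin n, Real.sin (ks j.succ * β / 2) / (ks j.succ * Real.sin (β / 2))|
          ≤ a * 4 := by
        refine (Finset.abs_sum_le_sum_abs _ _).trans ?_
        refine (Finset.sum_le_card_nsmul _ _ 4 (fun (l : ℕ) _ => (ih' (k + (2 * l - a + 1))).2)).trans ?_
        simp
      have ha' : (0 : ℝ) < a := by exact_mod_cast ha
      rw [inv_mul_le_iff₀ ha']
      exact this

/-- Lemma 3.1, first bound: for integers `k` and nonzero integers `k₀,…,k_n`,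
`|∫_𝕋 (sin(kβ/2)/(2 sin(β/2))) ∏_{j=0}^n (sin(k_jβ/2)/(k_j sin(β/2))) dβ| ≤ 4`. -/
theorem integral_I1_bound (n : ℕ) (k : ℤ) (ks : Fin (n + 1) → ℤ)
    (hks : ∀ j, ks j ≠ 0) :
    |∫ β in (-Real.pi)..Real.pi,
        (Real.sin (k * β / 2) / (2 * Real.sin (β / 2))) *
          ∏ j : Fin (n + 1), Real.sin (ks j * β / 2) / (ks j * Real.sin (β / 2))| ≤ 4 := by
  exact (main_I1 (n + 1) ks hks k).2
end

section
/- For all integers k and A, the quantity I₁(k,A) = 2∫_0^{π/2} sin(kx) cos(Ax)/sin(x) dx satisfies |I₁(k,A)| ≤ 4. (The integrand extends continuously to x = 0 since |sin(kx)/sin(x)| ≤ |k| on (0, π/2].) -/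
open MeasureTheory

lemma I1_step (n : ℕ)
    (h : IntervalIntegrable (fun x : ℝ => Real.sin (n * x) / Real.sin x) volume 0 (Real.pi / 2)) :
    IntervalIntegrable (fun x : ℝ => Real.sin ((n + 2 : ℕ) * x) / Real.sin x) volume 0 (Real.pi / 2) ∧
    ∫ x in (0 : ℝ)..(Real.pi / 2), Real.sin ((n + 2 : ℕ) * x) / Real.sin x =
      (∫ x in (0 : ℝ)..(Real.pi / 2), Real.sin (n * x) / Real.sin x)
        + 2 * Real.sin ((n + 1) * (Real.pi / 2)) / (n + 1) := by
  have hpi := Real.pi_pos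
  have hc : IntervalIntegrable (fun x : ℝ => 2 * Real.cos (((n : ℝ) + 1) * x)) volume 0
      (Real.pi / 2) := Continuous.intervalIntegrable (by fun_prop) _ _
  have heq : Set.EqOn (fun x : ℝ => Real.sin (n * x) / Real.sin x + 2 * Real.cos (((n : ℝ) + 1) * x))
      (fun x : ℝ => Real.sin ((n + 2 : ℕ) * x) / Real.sin x) (Set.uIoc 0 (Real.pi / 2)) := by
    intro x hx
    rw [Set.uIoc_of_le (by positivity)] at hx
    have hs : Real.sin x ≠ 0 := (Real.sin_pos_of_pos_of_lt_pi hx.1 (by linarith [hx.2])).ne'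
    have e1 : ((n + 2 : ℕ) : ℝ) * x = ((n : ℝ) + 1) * x + x := by push_cast; ring
    have e2 : (n : ℝ) * x = ((n : ℝ) + 1) * x - x := by ring
    simp only
    rw [e1, e2, Real.sin_add, Real.sin_sub]
    field_simp
    ring
  refine ⟨(h.add hc).congr heq, ?_⟩
  rw [← intervalIntegral.integral_congr_ae (Filter.Eventually.of_forall heq), intervalIntegral.integral_add h hc]
  congr 1
  have hn : (n : ℝ) + 1 ≠ 0 := by positivity
  rw [intervalIntegral.integral_const_mul, intervalIntegral.integral_comp_mul_left _ hn]
  simp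
  field_simp

lemma I1_int : ∀ n : ℕ,
    IntervalIntegrable (fun x : ℝ => Real.sin (n * x) / Real.sin x) volume 0 (Real.pi / 2) ∧
    IntervalIntegrable (fun x : ℝ => Real.sin ((n + 1 : ℕ) * x) / Real.sin x) volume 0 (Real.pi / 2)
  | 0 => by
    refine ⟨by simp, ?_⟩
    refine IntervalIntegrable.congr (f := fun _ => (1 : ℝ)) ?_ (by simp)
    intro x hx
    have hpi := Real.pi_pos
    rw [Set.uIoc_of_le (by positivity)] at hx
    have hs : Real.sin x ≠ 0 := (Real.sin_pos_of_pos_of_lt_pi hx.1 (by linarith [hx.2])).ne'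
    simp [hs]
  | n + 1 => ⟨(I1_int n).2, (I1_step n (I1_int n).1).1⟩

noncomputable def I1J (n : ℕ) : ℝ := ∫ x in (0 : ℝ)..(Real.pi / 2), Real.sin (n * x) / Real.sin x

lemma I1J_step (n : ℕ) :
    I1J (n + 2) = I1J n + 2 * Real.sin ((n + 1) * (Real.pi / 2)) / (n + 1) :=
  (I1_step n (I1_int n).1).2

lemma I1J_zero : I1J 0 = 0 := by simp [I1J]

lemma I1J_one : I1J 1 = Real.pi / 2 := by
  have : I1J 1 = ∫ x in (0 : ℝ)..(Real.pi / 2), (1 : ℝ) := by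
    refine intervalIntegral.integral_congr_ae (Filter.Eventually.of_forall ?_)
    intro x hx
    have hpi := Real.pi_pos
    rw [Set.uIoc_of_le (by positivity)] at hx
    have hs : Real.sin x ≠ 0 := (Real.sin_pos_of_pos_of_lt_pi hx.1 (by linarith [hx.2])).ne'
    simp [hs]
  rw [this]; simp

lemma I1J_odd (m : ℕ) : I1J (2 * m + 1) = Real.pi / 2 := by
  induction m with
  | zero => simpa using I1J_one
  | succ m ih =>
    have := I1J_step (2 * m + 1)
    rw [ih] at this
    have e : (((2 * m + 1 : ℕ) : ℝ) + 1) * (Real.pi / 2) = ((m + 1 : ℕ) : ℝ) * Real.pi := by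
      push_cast; ring
    rw [e, Real.sin_nat_mul_pi] at this
    simpa [mul_add, add_assoc, add_comm, add_left_comm] using this

lemma I1J_s1 (m : ℕ) : I1J (4 * m + 2) = I1J (4 * m) + 2 / (4 * m + 1) := by
  rw [I1J_step]
  have e : (((4 * m : ℕ) : ℝ) + 1) * (Real.pi / 2) = Real.pi / 2 + (m : ℝ) * (2 * Real.pi) := by
    push_cast; ring
  rw [e, Real.sin_add_nat_mul_two_pi]
  simp

lemma I1J_s2 (m : ℕ) : I1J (4 * (m + 1)) = I1J (4 * m + 2) - 2 / (4 * m + 3) := by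
  have := I1J_step (4 * m + 2)
  have e : (((4 * m + 2 : ℕ) : ℝ) + 1) * (Real.pi / 2)
      = (Real.pi / 2 + Real.pi) + (m : ℝ) * (2 * Real.pi) := by
    push_cast; ring
  rw [e, Real.sin_add_nat_mul_two_pi, Real.sin_add_pi] at this
  have e2 : 4 * (m + 1) = 4 * m + 2 + 2 := by ring
  have e3 : (((4 * m + 2 : ℕ) : ℝ) + 1) = 4 * m + 3 := by push_cast; ring
  rw [e2, this, e3, Real.sin_pi_div_two]
  ring

lemma I1J_even (m : ℕ) : 0 ≤ I1J (4 * m) ∧ I1J (4 * m) + 2 / (4 * m + 1) ≤ 2 := by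
  induction m with
  | zero => simp [I1J_zero]
  | succ m ih =>
    rw [I1J_s2, I1J_s1]
    have h1 : (2 : ℝ) / (4 * m + 3) ≤ 2 / (4 * m + 1) := by gcongr; norm_num
    have h2 : (2 : ℝ) / (4 * (m + 1 : ℕ) + 1) ≤ 2 / (4 * m + 3) := by
      push_cast; exact div_le_div_of_nonneg_left (by norm_num) (by positivity) (by linarith)
    constructor <;> linarith [ih.1, ih.2]

lemma I1J_bound (n : ℕ) : |I1J n| ≤ 2 := by
  rcases Nat.even_or_odd' n with ⟨c, rfl | rfl⟩
  · rcases Nat.even_or_odd' c with ⟨m, rfl | rfl⟩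
    · rw [show 2 * (2 * m) = 4 * m by ring]
      have := I1J_even m
      have h : (0 : ℝ) ≤ 2 / (4 * m + 1) := by positivity
      rw [abs_le]; constructor <;> linarith
    · rw [show 2 * (2 * m + 1) = 4 * m + 2 by ring, I1J_s1]
      have := I1J_even m
      have h : (0 : ℝ) ≤ 2 / (4 * m + 1) := by positivity
      rw [abs_le]; constructor <;> linarith
  · rw [I1J_odd, abs_le]
    constructor <;> linarith [Real.pi_pos, Real.pi_le_four]

lemma I1_Z (n : ℤ) :
    IntervalIntegrable (fun x : ℝ => Real.sin (n * x) / Real.sin x) volume 0 (Real.pi / 2) ∧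
    |∫ x in (0 : ℝ)..(Real.pi / 2), Real.sin (n * x) / Real.sin x| ≤ 2 := by
  obtain ⟨m, rfl | rfl⟩ := n.eq_nat_or_neg
  · exact ⟨by simpa using (I1_int m).1, by simpa [I1J] using I1J_bound m⟩
  · have e : (fun x : ℝ => Real.sin (((-(m : ℤ) : ℤ) : ℝ) * x) / Real.sin x)
        = fun x : ℝ => -(Real.sin (m * x) / Real.sin x) := by
      funext x; simp [neg_div]
    rw [e]
    refine ⟨(I1_int m).1.neg, ?_⟩
    rw [intervalIntegral.integral_neg, abs_neg]
    exact I1J_bound m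

/-- For all integers `k` and `A`, `|I₁(k,A)| = |2∫₀^{π/2} sin(kx)cos(Ax)/sin(x) dx| ≤ 4`. -/
theorem I1_integral_bound (k A : ℤ) :
    |2 * ∫ x in (0 : ℝ)..(Real.pi / 2),
        Real.sin (k * x) * Real.cos (A * x) / Real.sin x| ≤ 4 := by
  obtain ⟨i1, b1⟩ := I1_Z (k + A)
  obtain ⟨i2, b2⟩ := I1_Z (k - A)
  rw [← intervalIntegral.integral_const_mul]
  have e : (fun x : ℝ => 2 * (Real.sin (k * x) * Real.cos (A * x) / Real.sin x))
      = fun x : ℝ => Real.sin ((k + A : ℤ) * x) / Real.sin x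
        + Real.sin ((k - A : ℤ) * x) / Real.sin x := by
    funext x
    push_cast
    rw [add_mul, sub_mul, Real.sin_add, Real.sin_sub]
    ring
  rw [e, intervalIntegral.integral_add i1 i2]
  exact (abs_add_le _ _).trans (by linarith)
end

section
/- Let k and A be integers with 0 ≤ A < k and k − A odd. Then 2∫_0^{π/2} sin(kx) cos(Ax)/sin(x) dx = π. -/
open MeasureTheory

lemma dirichlet_aux (n : ℕ) :
    IntervalIntegrable (fun x : ℝ => Real.sin ((2 * n + 1) * x) / Real.sin x) volume 0 (Real.pi / 2) ∧
    ∫ x in (0 : ℝ)..(Real.pi / 2), Real.sin ((2 * n + 1) * x) / Real.sin x = Real.pi / 2 := by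
  have hpi := Real.pi_pos
  have hs : ∀ x ∈ Set.uIoc 0 (Real.pi / 2), Real.sin x ≠ 0 := by
    intro x hx
    rw [Set.uIoc_of_le (by positivity)] at hx
    exact (Real.sin_pos_of_pos_of_lt_pi hx.1 (by linarith [hx.2])).ne'
  induction n with
  | zero =>
    have h : Set.EqOn (fun _ : ℝ => (1 : ℝ))
        (fun x : ℝ => Real.sin ((2 * (0 : ℕ) + 1) * x) / Real.sin x)
        (Set.uIoc 0 (Real.pi / 2)) := by
      intro x hx
      simp [div_self (hs x hx)]
    refine ⟨(intervalIntegrable_const).congr h, ?_⟩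
    rw [← intervalIntegral.integral_congr_ae (Filter.Eventually.of_forall fun x hx => h hx)]
    simp
  | succ n ih =>
    obtain ⟨h1, h2⟩ := ih
    have h : Set.EqOn (fun x : ℝ => Real.sin ((2 * n + 1) * x) / Real.sin x
          + 2 * Real.cos ((2 * n + 2) * x))
        (fun x : ℝ => Real.sin ((2 * (n + 1 : ℕ) + 1) * x) / Real.sin x)
        (Set.uIoc 0 (Real.pi / 2)) := by
      intro x hx
      have := hs x hx
      have e1 : (2 * (n : ℝ) + 1) * x = (2 * n + 2) * x - x := by ring
      have e2 : (2 * ((n + 1 : ℕ) : ℝ) + 1) * x = (2 * n + 2) * x + x := by push_cast; ring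
      simp only [e1, e2, Real.sin_add, Real.sin_sub]
      field_simp
      ring
    have hc : IntervalIntegrable (fun x : ℝ => 2 * Real.cos ((2 * n + 2) * x)) volume
        0 (Real.pi / 2) := Continuous.intervalIntegrable (by fun_prop) _ _
    refine ⟨(h1.add hc).congr h, ?_⟩
    rw [← intervalIntegral.integral_congr_ae (Filter.Eventually.of_forall fun x hx => h hx),
      intervalIntegral.integral_add h1 hc, h2, intervalIntegral.integral_const_mul,
      intervalIntegral.integral_comp_mul_left (fun y => Real.cos y) (by positivity), integral_cos]
    have e : (2 * (n : ℝ) + 2) * (Real.pi / 2) = (n + 1 : ℕ) * Real.pi := by push_cast; ring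
    rw [e, Real.sin_nat_mul_pi]
    simp

/-- For integers `0 ≤ A < k` with `k - A` odd,
`2∫₀^{π/2} sin(kx)cos(Ax)/sin(x) dx = π`. -/
theorem I1_integral_eq_pi (k A : ℤ) (hA : 0 ≤ A) (hAk : A < k) (hodd : Odd (k - A)) :
    2 * ∫ x in (0 : ℝ)..(Real.pi / 2),
        Real.sin (k * x) * Real.cos (A * x) / Real.sin x = Real.pi := by
  obtain ⟨m, hm⟩ := hodd
  lift A to ℕ using hA
  lift m to ℕ using (by omega)
  obtain rfl : k = 2 * m + 1 + A := by omega
  obtain ⟨h1, h2⟩ := dirichlet_aux m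
  obtain ⟨h3, h4⟩ := dirichlet_aux (m + A)
  rw [← intervalIntegral.integral_const_mul]
  have : ∀ x : ℝ, 2 * (Real.sin (((2 * m + 1 + A : ℤ) : ℝ) * x) * Real.cos (((A : ℤ) : ℝ) * x)
      / Real.sin x) = Real.sin ((2 * m + 1) * x) / Real.sin x
        + Real.sin ((2 * (m + A : ℕ) + 1) * x) / Real.sin x := by
    intro x
    have e1 : (2 * (m : ℝ) + 1) * x = (2 * m + 1 + A) * x - A * x := by ring
    have e2 : (2 * ((m + A : ℕ) : ℝ) + 1) * x = (2 * m + 1 + A) * x + A * x := by push_cast; ring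
    rw [e1, e2, Real.sin_add, Real.sin_sub]
    push_cast
    ring
  simp only [this]
  rw [intervalIntegral.integral_add h1 h3, h2, h4]
  ring
end

section
/- Let A_μ ∈ [−1,1] and A_{ρσ} ∈ ℝ, and define a_k and b_k for k ≥ 1 and the matrices S and S⁻¹ as in the context. Then: (i) for all integers k, j ≥ 1, Σ_{m=1}^{∞} S_{k,m} S⁻¹_{m,j} = δ_{k,j} and Σ_{m=1}^{∞} S⁻¹_{k,m} S_{m,j} = δ_{k,j} (each sum has only finitely many nonzero terms, namely k ≤ m ≤ j); (ii) for all integers j > k ≥ 2 one has the recursion (a_k − a_j) S⁻¹_{k,j} = −b_{j−1} S⁻¹_{k,j−1}, so that for every k ≥ 2 and j ≥ 1, −a_j S⁻¹_{k,j} + b_{j−1} S⁻¹_{k,j−1} = −a_k S⁻¹_{k,j} (with the conventions S⁻¹_{k,0} := 0 and b_0 := 0). -/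
open scoped BigOperators

/-- `a_k = k(k² − 1 + δ₁(k))`. -/
noncomputable def aCoef (k : ℕ) : ℂ :=
  (k : ℂ) * ((k : ℂ) ^ 2 - 1 + if k = 1 then 1 else 0)

/-- `b_k = i(1 − A_μ)A_{ρσ} k`. -/
noncomputable def bCoef (Aμ Aρσ : ℝ) (k : ℕ) : ℂ :=
  Complex.I * ((1 - Aμ) : ℝ) * (Aρσ : ℝ) * (k : ℂ)

/-- The matrix `S⁻¹`. -/
noncomputable def Sinv (Aμ Aρσ : ℝ) (k j : ℕ) : ℂ :=
  if k = 1 ∧ j = 1 then 1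
  else if 2 ≤ k ∧ k ≤ j then
    (-1 : ℂ) ^ (j - k) *
      ∏ l ∈ Finset.Icc 1 (j - k), bCoef Aμ Aρσ (k - 1 + l) / (aCoef k - aCoef (k + l))
  else 0

/-- The matrix `S`. -/
noncomputable def Smat (Aμ Aρσ : ℝ) (k j : ℕ) : ℂ :=
  if k = 1 ∧ j = 1 then 1
  else if 2 ≤ k ∧ k ≤ j then
    ∏ l ∈ Finset.Icc 1 (j - k), bCoef Aμ Aρσ (k - 1 + l) / (aCoef (k - 1 + l) - aCoef j)
  else 0

lemma aCoef_ge {k : ℕ} (hk : 2 ≤ k) : aCoef k = (((k : ℤ) * ((k : ℤ) ^ 2 - 1) : ℤ) : ℂ) := by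
  have : k ≠ 1 := by omega
  simp [aCoef, this]

lemma aCoef_sub_ne {k j : ℕ} (hk : 2 ≤ k) (hkj : k < j) : aCoef k - aCoef j ≠ 0 := by
  rw [aCoef_ge hk, aCoef_ge (by omega : 2 ≤ j)]
  rw [← Int.cast_sub]
  refine Int.cast_ne_zero.2 ?_
  obtain ⟨d, rfl⟩ := Nat.exists_eq_add_of_lt hkj
  obtain ⟨c, rfl⟩ := Nat.exists_eq_add_of_le hk
  apply ne_of_lt
  push_cast
  have hc : (0 : ℤ) ≤ c := by positivity
  have hd : (0 : ℤ) ≤ d := by positivity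
  have h : (0 : ℤ) < 11 + c * 12 + c ^ 2 * 3 + d * 11 + d * c * 12 + d * c ^ 2 * 3 + 
    (d + 1) ^ 2 * (c * 3 + 6) + (d + 1) ^ 3 := by positivity
  linear_combination h

lemma prod_Icc_range (f : ℕ → ℂ) (n : ℕ) :
    ∏ l ∈ Finset.Icc 1 n, f l = ∏ l ∈ Finset.range n, f (l + 1) := by
  induction n with
  | zero => simp
  | succ n ih => rw [Finset.prod_Icc_succ_top (by omega), ih, Finset.prod_range_succ]

lemma Sinv_zero (Aμ Aρσ : ℝ) {k j : ℕ} (h : j < k) : Sinv Aμ Aρσ k j = 0 := by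
  unfold Sinv
  rw [if_neg (by omega), if_neg (by omega)]

lemma Smat_zero (Aμ Aρσ : ℝ) {k j : ℕ} (h : j < k) : Smat Aμ Aρσ k j = 0 := by
  unfold Smat
  rw [if_neg (by omega), if_neg (by omega)]

lemma Sinv_row_zero (Aμ Aρσ : ℝ) (j : ℕ) : Sinv Aμ Aρσ 0 j = 0 := by
  unfold Sinv
  rw [if_neg (by omega), if_neg (by omega)]

lemma Smat_row_zero (Aμ Aρσ : ℝ) (j : ℕ) : Smat Aμ Aρσ 0 j = 0 := by
  unfold Smat
  rw [if_neg (by omega), if_neg (by omega)]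

lemma Sinv_one (Aμ Aρσ : ℝ) (j : ℕ) : Sinv Aμ Aρσ 1 j = if j = 1 then 1 else 0 := by
  simp [Sinv]

lemma Smat_one (Aμ Aρσ : ℝ) (j : ℕ) : Smat Aμ Aρσ 1 j = if j = 1 then 1 else 0 := by
  simp [Smat]

lemma Sinv_diag (Aμ Aρσ : ℝ) {k : ℕ} (hk : 1 ≤ k) : Sinv Aμ Aρσ k k = 1 := by
  by_cases h : k = 1
  · simp [Sinv, h]
  · have : 2 ≤ k := by omega
    simp [Sinv, this]

lemma Smat_diag (Aμ Aρσ : ℝ) {k : ℕ} (hk : 1 ≤ k) : Smat Aμ Aρσ k k = 1 := by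
  by_cases h : k = 1
  · simp [Smat, h]
  · have : 2 ≤ k := by omega
    simp [Smat, this]

lemma Sinv_rec (Aμ Aρσ : ℝ) (k j : ℕ) (hk : 2 ≤ k) (hkj : k < j) :
    (aCoef k - aCoef j) * Sinv Aμ Aρσ k j =
      -bCoef Aμ Aρσ (j - 1) * Sinv Aμ Aρσ k (j - 1) := by
  have hne := aCoef_sub_ne hk hkj
  obtain ⟨d, rfl⟩ := Nat.exists_eq_add_of_lt hkj
  unfold Sinv
  rw [if_neg (by omega), if_pos (by omega), if_neg (by omega), if_pos (by omega)]
  have e1 : k + d + 1 - k = d + 1 := by omega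
  have e2 : k + d + 1 - 1 = k + d := by omega
  have e3 : k + d - k = d := by omega
  have e4 : k - 1 + (d + 1) = k + d := by omega
  rw [e1, e2, e3, Finset.prod_Icc_succ_top (by omega), e4]
  rw [← add_assoc k d 1, pow_succ]
  field_simp

lemma Sinv_rec' (Aμ Aρσ : ℝ) (k j : ℕ) (hk : 2 ≤ k) :
    (aCoef k - aCoef j) * Sinv Aμ Aρσ k j =
      -bCoef Aμ Aρσ (j - 1) * Sinv Aμ Aρσ k (j - 1) := by
  rcases lt_trichotomy k j with h | h | h
  · exact Sinv_rec Aμ Aρσ k j hk h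
  · subst h
    rw [Sinv_zero Aμ Aρσ (show k - 1 < k by omega)]
    simp
  · rw [Sinv_zero Aμ Aρσ h, Sinv_zero Aμ Aρσ (show j - 1 < k by omega)]
    simp

lemma Smat_rec (Aμ Aρσ : ℝ) (k j : ℕ) (hk : 2 ≤ k) :
    (aCoef k - aCoef j) * Smat Aμ Aρσ k j =
      bCoef Aμ Aρσ k * Smat Aμ Aρσ (k + 1) j := by
  rcases lt_trichotomy k j with h | h | h
  · have hne := aCoef_sub_ne hk h
    obtain ⟨d, rfl⟩ := Nat.exists_eq_add_of_lt h
    unfold Smat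
    rw [if_neg (by omega), if_pos (by omega), if_neg (by omega), if_pos (by omega)]
    have e1 : k + d + 1 - k = d + 1 := by omega
    have e2 : k + d + 1 - (k + 1) = d := by omega
    rw [e1, e2, prod_Icc_range, prod_Icc_range, Finset.prod_range_succ']
    have e3 : k - 1 + (0 + 1) = k := by omega
    have e4 : ∀ l, k - 1 + (l + 1 + 1) = k + 1 - 1 + (l + 1) := by intro l; omega
    simp only [e3, e4]
    field_simp
  · subst h
    rw [Smat_zero Aμ Aρσ (show k < k + 1 by omega)]
    simp
  · rw [Smat_zero Aμ Aρσ h, Smat_zero Aμ Aρσ (show j < k + 1 by omega)]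
    simp

lemma tsum_fin (f : ℕ → ℂ) (N : ℕ) (h0 : f 0 = 0) (h : ∀ m, N < m → f m = 0) :
    ∑' m, f m = ∑ i ∈ Finset.range N, f (i + 1) := by
  rw [tsum_eq_sum (s := Finset.range (N + 1)), Finset.sum_range_succ', h0, add_zero]
  intro m hm
  apply h
  rw [Finset.mem_range] at hm
  omega

lemma fin_left (Aμ Aρσ : ℝ) (N k j : ℕ) (hk : 1 ≤ k) (hj : 1 ≤ j) (hkN : k ≤ N) (hjN : j ≤ N) :
    ∑ i ∈ Finset.range N, Sinv Aμ Aρσ k (i + 1) * Smat Aμ Aρσ (i + 1) j =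
      if k = j then 1 else 0 := by
  have single : (∀ i, i + 1 ≠ k → Sinv Aμ Aρσ k (i + 1) * Smat Aμ Aρσ (i + 1) j = 0) →
      ∑ i ∈ Finset.range N, Sinv Aμ Aρσ k (i + 1) * Smat Aμ Aρσ (i + 1) j = Smat Aμ Aρσ k j := by
    intro h
    rw [Finset.sum_eq_single (k - 1)]
    · rw [Nat.sub_add_cancel hk, Sinv_diag Aμ Aρσ hk, one_mul]
    · intro b _ hb
      exact h b (by omega)
    · intro hb
      exact absurd (Finset.mem_range.2 (by omega)) hb
  by_cases hk1 : k = 1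
  · subst hk1
    rw [single, Smat_one]
    · simp [eq_comm]
    · intro i hi
      rw [Sinv_one, if_neg hi, zero_mul]
  have hk2 : 2 ≤ k := by omega
  by_cases hkj : k < j
  · rw [if_neg (by omega)]
    have hne := aCoef_sub_ne hk2 hkj
    refine (mul_eq_zero.1 ?_).resolve_left hne
    rw [Finset.mul_sum]
    let g : ℕ → ℂ := fun m => bCoef Aμ Aρσ m * Sinv Aμ Aρσ k m * Smat Aμ Aρσ (m + 1) j
    have hg : ∀ i, (aCoef k - aCoef j) * (Sinv Aμ Aρσ k (i + 1) * Smat Aμ Aρσ (i + 1) j) =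
        g (i + 1) - g i := by
      intro i
      have h1 := Sinv_rec' Aμ Aρσ k (i + 1) hk2
      rw [Nat.add_sub_cancel] at h1
      have h2 : Sinv Aμ Aρσ k (i + 1) * ((aCoef (i + 1) - aCoef j) * Smat Aμ Aρσ (i + 1) j) =
          Sinv Aμ Aρσ k (i + 1) * (bCoef Aμ Aρσ (i + 1) * Smat Aμ Aρσ (i + 1 + 1) j) := by
        by_cases hi : i + 1 < k
        · rw [Sinv_zero Aμ Aρσ hi, zero_mul, zero_mul]
        · rw [Smat_rec Aμ Aρσ (i + 1) j (by omega)]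
      simp only [g]
      linear_combination Smat Aμ Aρσ (i + 1) j * h1 + h2
    rw [Finset.sum_congr rfl (fun i _ => hg i), Finset.sum_range_sub]
    simp only [g]
    rw [Smat_zero Aμ Aρσ (show j < N + 1 by omega), Sinv_zero Aμ Aρσ (show 0 < k by omega)]
    ring
  · rw [single]
    · by_cases h : k = j
      · subst h
        rw [Smat_diag Aμ Aρσ hk, if_pos rfl]
      · rw [Smat_zero Aμ Aρσ (by omega), if_neg h]
    · intro i hi
      by_cases h : i + 1 < k
      · rw [Sinv_zero Aμ Aρσ h, zero_mul]
      · rw [Smat_zero Aμ Aρσ (show j < i + 1 by omega), mul_zero]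

lemma fin_right (Aμ Aρσ : ℝ) (N k j : ℕ) (hk : 1 ≤ k) (hj : 1 ≤ j) (hkN : k ≤ N) (hjN : j ≤ N) :
    ∑ i ∈ Finset.range N, Smat Aμ Aρσ k (i + 1) * Sinv Aμ Aρσ (i + 1) j =
      if k = j then 1 else 0 := by
  let A : Matrix (Fin N) (Fin N) ℂ := Matrix.of fun i l => Sinv Aμ Aρσ (i + 1) (l + 1)
  let B : Matrix (Fin N) (Fin N) ℂ := Matrix.of fun i l => Smat Aμ Aρσ (i + 1) (l + 1)
  have hAB : A * B = 1 := by
    ext x y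
    have h := fin_left Aμ Aρσ N (x + 1) (y + 1) (by omega) (by omega) (by omega) (by omega)
    rw [← Fin.sum_univ_eq_sum_range
      (fun i => Sinv Aμ Aρσ (x + 1) (i + 1) * Smat Aμ Aρσ (i + 1) (y + 1))] at h
    rw [Matrix.mul_apply, Matrix.one_apply]
    simpa [A, B, Fin.ext_iff] using h
  have hBA : B * A = 1 := mul_eq_one_comm.1 hAB
  have h := congrFun (congrFun hBA ⟨k - 1, by omega⟩) ⟨j - 1, by omega⟩
  rw [Matrix.mul_apply, Matrix.one_apply] at h
  simp only [A, B, Matrix.of_apply, Nat.sub_add_cancel hk, Nat.sub_add_cancel hj,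
    Fin.mk.injEq] at h
  rw [← Fin.sum_univ_eq_sum_range
      (fun i => Smat Aμ Aρσ k (i + 1) * Sinv Aμ Aρσ (i + 1) j), h]
  have : k - 1 = j - 1 ↔ k = j := by omega
  simp only [this]

/-- Proposition 2.3 (diagonalization): `S` and `S⁻¹` are mutually inverse, and
`S⁻¹` satisfies the recursion that diagonalizes the upper triangular system
`M = -a·Id + b·shift`. -/
theorem S_Sinv_inverse_and_recursion (Aμ Aρσ : ℝ) (hAμ : Aμ ∈ Set.Icc (-1 : ℝ) 1) :
    ((∀ k j : ℕ, 1 ≤ k → 1 ≤ j →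
        ∑' m : ℕ, Smat Aμ Aρσ k m * Sinv Aμ Aρσ m j = if k = j then 1 else 0) ∧
      (∀ k j : ℕ, 1 ≤ k → 1 ≤ j →
        ∑' m : ℕ, Sinv Aμ Aρσ k m * Smat Aμ Aρσ m j = if k = j then 1 else 0)) ∧
    ((∀ k j : ℕ, 2 ≤ k → k < j →
        (aCoef k - aCoef j) * Sinv Aμ Aρσ k j = -bCoef Aμ Aρσ (j - 1) * Sinv Aμ Aρσ k (j - 1)) ∧
      (∀ k j : ℕ, 2 ≤ k → 1 ≤ j →
        -aCoef j * Sinv Aμ Aρσ k j + bCoef Aμ Aρσ (j - 1) * Sinv Aμ Aρσ k (j - 1) =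
          -aCoef k * Sinv Aμ Aρσ k j)) := by
  refine ⟨⟨?_, ?_⟩, Sinv_rec Aμ Aρσ, ?_⟩
  · intro k j hk hj
    rw [tsum_fin _ (max k j), fin_right Aμ Aρσ _ k j hk hj (le_max_left _ _) (le_max_right _ _)]
    · rw [Sinv_row_zero, mul_zero]
    · intro m hm
      rw [Sinv_zero Aμ Aρσ (lt_of_le_of_lt (le_max_right k j) hm), mul_zero]
  · intro k j hk hj
    rw [tsum_fin _ (max k j), fin_left Aμ Aρσ _ k j hk hj (le_max_left _ _) (le_max_right _ _)]
    · rw [Smat_row_zero, mul_zero]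
    · intro m hm
      rw [Smat_zero Aμ Aρσ (lt_of_le_of_lt (le_max_right k j) hm), mul_zero]
  · intro k j hk _
    linear_combination Sinv_rec' Aμ Aρσ k j hk
end

section
/- Let A_μ ∈ [−1,1] and A_{ρσ} ∈ ℝ, and define a_k, b_k and the matrices S and S⁻¹ as in the context. Then there exists a constant C_S, depending only on the product (1 − A_μ)|A_{ρσ}|, such that the induced operators on ℓ¹ are bounded with norm at most C_S: for every complex sequence z = (z_j)_{j≥1} with Σ_j |z_j| < ∞, the sums (Sz)_k = Σ_{j≥1} S_{k,j} z_j and (S⁻¹z)_k = Σ_{j≥1} S⁻¹_{k,j} z_j converge absolutely and Σ_{k≥1} |(Sz)_k| ≤ C_S Σ_{j≥1} |z_j| and Σ_{k≥1} |(S⁻¹z)_k| ≤ C_S Σ_{j≥1} |z_j|. -/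
open scoped BigOperators

lemma aux_general (c : ℝ) (hc : 0 ≤ c) (M : ℕ → ℕ → ℂ)
    (hM : ∀ k j, k ≤ j → ‖M k j‖ ≤ c ^ (j - k) / (j - k).factorial)
    (hM0 : ∀ k j, j < k → M k j = 0)
    (z : ℕ → ℂ) (hz : Summable (fun j : ℕ => ‖z (j + 1)‖)) :
    (∀ k : ℕ, 1 ≤ k → Summable (fun j : ℕ => ‖M k (j + 1) * z (j + 1)‖)) ∧
    (∑' k : ℕ, ENNReal.ofReal ‖∑' j : ℕ, M (k + 1) (j + 1) * z (j + 1)‖) ≤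
            ENNReal.ofReal (Real.exp c * ∑' j : ℕ, ‖z (j + 1)‖) := by
  have hb : ∀ k j, ‖M k j‖ ≤ Real.exp c := by
    intro k j
    rcases le_or_gt k j with h | h
    · exact (hM k j h).trans (Real.pow_div_factorial_le_exp c hc _)
    · rw [hM0 k j h, norm_zero]; exact (Real.exp_pos c).le
  have hs : ∀ k : ℕ, Summable (fun j : ℕ => ‖M k (j + 1) * z (j + 1)‖) := by
    intro k
    refine Summable.of_nonneg_of_le (fun _ => norm_nonneg _) (fun j => ?_)
      (hz.mul_left (Real.exp c))
    rw [norm_mul]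
    exact mul_le_mul_of_nonneg_right (hb _ _) (norm_nonneg _)
  refine ⟨fun k _ => hs k, ?_⟩
  have hcol : ∀ j, ∑' k : ℕ, ENNReal.ofReal ‖M (k + 1) (j + 1)‖ ≤ ENNReal.ofReal (Real.exp c) := by
    intro j
    rw [tsum_eq_sum (s := Finset.range (j + 1))]
    · rw [← ENNReal.ofReal_sum_of_nonneg (fun _ _ => norm_nonneg _)]
      apply ENNReal.ofReal_le_ofReal
      rw [← Finset.sum_range_reflect]
      refine le_trans (Finset.sum_le_sum (fun i hi => ?_)) (Real.sum_le_exp_of_nonneg hc (j + 1))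
      have hi' := Finset.mem_range.1 hi
      have := hM (j + 1 - 1 - i + 1) (j + 1) (by omega)
      have e : j + 1 - (j + 1 - 1 - i + 1) = i := by omega
      rwa [e] at this
    · intro k hk
      have : j < k := by
        by_contra h
        exact hk (Finset.mem_range.2 (by omega))
      rw [hM0 _ _ (by omega)]; simp
  calc (∑' k : ℕ, ENNReal.ofReal ‖∑' j : ℕ, M (k + 1) (j + 1) * z (j + 1)‖)
      ≤ ∑' k : ℕ, ∑' j : ℕ, ENNReal.ofReal ‖M (k + 1) (j + 1)‖ * ENNReal.ofReal ‖z (j + 1)‖ := by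
        refine ENNReal.tsum_le_tsum (fun k => ?_)
        refine (ENNReal.ofReal_le_ofReal (norm_tsum_le_tsum_norm (hs (k + 1)))).trans ?_
        rw [ENNReal.ofReal_tsum_of_nonneg (fun _ => norm_nonneg _) (hs (k + 1))]
        refine le_of_eq (tsum_congr fun j => ?_)
        rw [norm_mul, ENNReal.ofReal_mul (norm_nonneg _)]
    _ = ∑' j : ℕ, (∑' k : ℕ, ENNReal.ofReal ‖M (k + 1) (j + 1)‖) * ENNReal.ofReal ‖z (j + 1)‖ := by
        rw [ENNReal.tsum_comm]
        exact tsum_congr fun j => ENNReal.tsum_mul_right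
    _ ≤ ∑' j : ℕ, ENNReal.ofReal (Real.exp c) * ENNReal.ofReal ‖z (j + 1)‖ :=
        ENNReal.tsum_le_tsum fun j => mul_le_mul_left (hcol j) _
    _ = _ := by
        rw [ENNReal.tsum_mul_left, ENNReal.ofReal_mul (Real.exp_pos c).le,
          ENNReal.ofReal_tsum_of_nonneg (fun _ => norm_nonneg _) hz]

lemma norm_bCoef (Aμ Aρσ : ℝ) (h : Aμ ≤ 1) (k : ℕ) :
    ‖bCoef Aμ Aρσ k‖ = (1 - Aμ) * |Aρσ| * k := by
  unfold bCoef
  rw [norm_mul, norm_mul, norm_mul, Complex.norm_I, Complex.norm_real, Complex.norm_real,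
    Complex.norm_natCast, Real.norm_eq_abs, Real.norm_eq_abs, abs_of_nonneg (by linarith : 0 ≤ 1 - Aμ)]
  ring

lemma norm_aCoef_sub (n l : ℕ) (hn : 2 ≤ n) :
    (l : ℝ) * (n + l) ≤ ‖aCoef n - aCoef (n + l)‖ := by
  have e : aCoef n - aCoef (n + l) =
      ((-((l : ℝ) * ((n + l) ^ 2 + (n + l) * n + n ^ 2 - 1)) : ℝ) : ℂ) := by
    unfold aCoef
    rw [if_neg (by omega), if_neg (by omega)]
    push_cast
    ring
  rw [e, Complex.norm_real, norm_neg, Real.norm_eq_abs]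
  refine le_trans ?_ (le_abs_self _)
  have h2 : (2 : ℝ) ≤ n := by exact_mod_cast hn
  have hl : (0 : ℝ) ≤ l := by positivity
  apply mul_le_mul_of_nonneg_left _ hl
  nlinarith

/-- single factor bound -/
lemma factor_bound (Aμ Aρσ : ℝ) (h : Aμ ≤ 1) (n l m : ℕ) (hn : 2 ≤ n) (hl : 1 ≤ l)
    (hm : m ≤ n + l) :
    ‖bCoef Aμ Aρσ m / (aCoef n - aCoef (n + l))‖ ≤ (1 - Aμ) * |Aρσ| / l := by
  have hc : 0 ≤ (1 - Aμ) * |Aρσ| := mul_nonneg (by linarith) (abs_nonneg _)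
  have hl' : (1 : ℝ) ≤ l := by exact_mod_cast hl
  have hm' : (m : ℝ) ≤ n + l := by exact_mod_cast hm
  have hn' : (2 : ℝ) ≤ n := by exact_mod_cast hn
  have h1 := norm_aCoef_sub n l hn
  have hpos : (0 : ℝ) < l * (n + l) := by positivity
  rw [norm_div, norm_bCoef _ _ h, div_le_div_iff₀ (by linarith) (by linarith)]
  calc (1 - Aμ) * |Aρσ| * m * l = (1 - Aμ) * |Aρσ| * (l * m) := by ring
    _ ≤ (1 - Aμ) * |Aρσ| * (l * (n + l)) := by gcongr
    _ ≤ _ := by gcongr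

lemma prod_Icc_eq (c : ℝ) (m : ℕ) :
    ∏ l ∈ Finset.Icc 1 m, c / (l : ℝ) = c ^ m / m.factorial := by
  induction m with
  | zero => simp
  | succ m ih =>
    rw [Finset.prod_Icc_succ_top (by omega), ih, Nat.factorial_succ, pow_succ]
    push_cast
    rw [div_mul_div_comm]
    ring

lemma Sinv_bound (Aμ Aρσ : ℝ) (h : Aμ ≤ 1) (k j : ℕ) (hkj : k ≤ j) :
    ‖Sinv Aμ Aρσ k j‖ ≤ ((1 - Aμ) * |Aρσ|) ^ (j - k) / (j - k).factorial := by
  have hc : 0 ≤ (1 - Aμ) * |Aρσ| := mul_nonneg (by linarith) (abs_nonneg _)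
  unfold Sinv
  split_ifs with h1 h2
  · simp [h1.1, h1.2]
  · rw [norm_mul, norm_pow, norm_neg, norm_one, one_pow, one_mul, norm_prod, ← prod_Icc_eq]
    refine Finset.prod_le_prod (fun _ _ => norm_nonneg _) fun l hl => ?_
    have := Finset.mem_Icc.1 hl
    exact factor_bound _ _ h k l _ h2.1 this.1 (by omega)
  · rw [norm_zero]; positivity

lemma Smat_bound (Aμ Aρσ : ℝ) (h : Aμ ≤ 1) (k j : ℕ) (hkj : k ≤ j) :
    ‖Smat Aμ Aρσ k j‖ ≤ ((1 - Aμ) * |Aρσ|) ^ (j - k) / (j - k).factorial := by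
  have hc : 0 ≤ (1 - Aμ) * |Aρσ| := mul_nonneg (by linarith) (abs_nonneg _)
  unfold Smat
  split_ifs with h1 h2
  · simp [h1.1, h1.2]
  · rw [norm_prod, ← prod_Icc_eq]
    have hr : ∏ l ∈ Finset.Icc 1 (j - k), (1 - Aμ) * |Aρσ| / (l : ℝ) =
        ∏ l ∈ Finset.Icc 1 (j - k), (1 - Aμ) * |Aρσ| / ((j - k + 1 - l : ℕ) : ℝ) := by
      refine Finset.prod_bij' (fun l _ => j - k + 1 - l) (fun l _ => j - k + 1 - l) ?_ ?_ ?_ ?_ ?_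
      · intro l hl; rw [Finset.mem_Icc] at *; omega
      · intro l hl; rw [Finset.mem_Icc] at *; omega
      · intro l hl; rw [Finset.mem_Icc] at *; omega
      · intro l hl; rw [Finset.mem_Icc] at *; omega
      · intro l hl
        rw [Finset.mem_Icc] at hl
        have e : j - k + 1 - (j - k + 1 - l) = l := by omega
        rw [e]
    rw [hr]
    refine Finset.prod_le_prod (fun _ _ => norm_nonneg _) fun l hl => ?_
    have := Finset.mem_Icc.1 hl
    have hb := factor_bound Aμ Aρσ h (k - 1 + l) (j - k + 1 - l) (k - 1 + l)
      (by omega) (by omega) (by omega)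
    have e : k - 1 + l + (j - k + 1 - l) = j := by omega
    rwa [e] at hb
  · rw [norm_zero]; positivity

/-- Lemma 2.4: the operators `S` and `S⁻¹` are bounded on `ℓ¹`, with operator norm
at most a constant `C_S` depending only on `(1 − A_μ)|A_{ρσ}|`. Sequences are
indexed by `j ≥ 1`, encoded here as `j + 1` for `j : ℕ`. -/
theorem S_Sinv_l1_bounded :
    ∃ C : ℝ → ℝ, ∀ (Aμ Aρσ : ℝ), Aμ ∈ Set.Icc (-1 : ℝ) 1 →
      ∀ z : ℕ → ℂ, Summable (fun j : ℕ => ‖z (j + 1)‖) →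
        ((∀ k : ℕ, 1 ≤ k → Summable (fun j : ℕ => ‖Smat Aμ Aρσ k (j + 1) * z (j + 1)‖)) ∧
          (∀ k : ℕ, 1 ≤ k → Summable (fun j : ℕ => ‖Sinv Aμ Aρσ k (j + 1) * z (j + 1)‖))) ∧
        ((∑' k : ℕ, ENNReal.ofReal ‖∑' j : ℕ, Smat Aμ Aρσ (k + 1) (j + 1) * z (j + 1)‖) ≤
            ENNReal.ofReal (C ((1 - Aμ) * |Aρσ|) * ∑' j : ℕ, ‖z (j + 1)‖) ∧
          (∑' k : ℕ, ENNReal.ofReal ‖∑' j : ℕ, Sinv Aμ Aρσ (k + 1) (j + 1) * z (j + 1)‖) ≤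
            ENNReal.ofReal (C ((1 - Aμ) * |Aρσ|) * ∑' j : ℕ, ‖z (j + 1)‖)) := by
  refine ⟨Real.exp, fun Aμ Aρσ hA z hz => ?_⟩
  have h : Aμ ≤ 1 := hA.2
  have hc : 0 ≤ (1 - Aμ) * |Aρσ| := mul_nonneg (by linarith) (abs_nonneg _)
  have hS := aux_general _ hc (Smat Aμ Aρσ) (Smat_bound Aμ Aρσ h)
    (fun k j hkj => by
      unfold Smat
      rw [if_neg (by omega), if_neg (by omega)]) z hz
  have hI := aux_general _ hc (Sinv Aμ Aρσ) (Sinv_bound Aμ Aρσ h)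
    (fun k j hkj => by
      unfold Sinv
      rw [if_neg (by omega), if_neg (by omega)]) z hz
  exact ⟨⟨hS.1, hI.1⟩, hS.2, hI.2⟩
end

section
/- Let x_c ∈ ℝ², R > 0, and let f₀ : 𝕋 → (−1, ∞) be continuous and satisfy the two normalization conditions ∫_𝕋 (1 + f₀(α))³ (cos α, sin α) dα = (0,0) and (1/2)∫_𝕋 (1 + f₀(α))² dα = π. Define the closed curve z₀(α) = x_c + R(1 + f₀(α))(cos α, sin α). If the image of z₀ is a circle, i.e. there exist c ∈ ℝ² and r > 0 with |z₀(α) − c| = r for all α ∈ 𝕋, then necessarily c = x_c, r = R, and f₀ ≡ 0. -/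
open MeasureTheory

/-- Remark 1.2: under the normalization conditions (centroid at `x_c` and enclosed
area `πR²`), the polar-graph curve `z₀(α) = x_c + R(1+f₀(α))(cos α, sin α)` is a
circle if and only if `f₀ ≡ 0`; moreover, if its image is a circle of center `c` and
radius `r`, then necessarily `c = x_c` and `r = R`. -/
theorem circle_iff_f_zero (xc : ℝ × ℝ) (R : ℝ) (hR : 0 < R) (f₀ : ℝ → ℝ)
    (hper : Function.Periodic f₀ (2 * Real.pi)) (hcont : Continuous f₀)
    (hlb : ∀ α, -1 < f₀ α)
    (hcentroid₁ : ∫ α in (-Real.pi)..Real.pi, (1 + f₀ α) ^ 3 * Real.cos α = 0)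
    (hcentroid₂ : ∫ α in (-Real.pi)..Real.pi, (1 + f₀ α) ^ 3 * Real.sin α = 0)
    (harea : (1 / 2) * ∫ α in (-Real.pi)..Real.pi, (1 + f₀ α) ^ 2 = Real.pi)
    (c : ℝ × ℝ) (r : ℝ) (hr : 0 < r)
    (hcircle : ∀ α : ℝ,
      (xc.1 + R * (1 + f₀ α) * Real.cos α - c.1) ^ 2 +
        (xc.2 + R * (1 + f₀ α) * Real.sin α - c.2) ^ 2 = r ^ 2) :
    c = xc ∧ r = R ∧ ∀ α, f₀ α = 0 := by
  obtain ⟨x, y⟩ := xc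
  obtain ⟨c1, c2⟩ := c
  simp only at hcircle
  obtain ⟨a, ha⟩ : ∃ a, c1 = x + R * a := ⟨(c1 - x) / R, by field_simp; ring⟩
  obtain ⟨b, hb⟩ : ∃ b, c2 = y + R * b := ⟨(c2 - y) / R, by field_simp; ring⟩
  obtain ⟨s, hs⟩ : ∃ s, r = R * s := ⟨r / R, by field_simp⟩
  subst ha hb hs
  have hs0 : 0 < s := pos_of_mul_pos_right hr hR.le
  have hρ : ∀ α, 0 < 1 + f₀ α := fun α => by linarith [hlb α]
  have key : ∀ α, (1 + f₀ α) ^ 2 - 2 * (1 + f₀ α) * (a * Real.cos α + b * Real.sin α)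
      = s ^ 2 - (a ^ 2 + b ^ 2) := by
    intro α
    have h := hcircle α
    have h2 : R ^ 2 * ((1 + f₀ α) ^ 2 * (Real.sin α ^ 2 + Real.cos α ^ 2)
        - 2 * (1 + f₀ α) * (a * Real.cos α + b * Real.sin α))
        = R ^ 2 * (s ^ 2 - (a ^ 2 + b ^ 2)) := by linear_combination h
    rw [Real.sin_sq_add_cos_sq, mul_one] at h2
    exact mul_left_cancel₀ (by positivity) h2
  have hk : 0 < s ^ 2 - (a ^ 2 + b ^ 2) := by
    by_contra hk
    have h0 := key 0
    have h1 := key Real.pi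
    simp only [Real.cos_zero, Real.sin_zero, Real.cos_pi, Real.sin_pi] at h0 h1
    have p0 := hρ 0
    have p1 := hρ Real.pi
    have q0 : 0 < (1 + f₀ 0) * a := by nlinarith
    have q1 : 0 < (1 + f₀ Real.pi) * (-a) := by nlinarith
    have := pos_of_mul_pos_right q0 p0.le
    have := pos_of_mul_pos_right q1 p1.le
    linarith
  obtain ⟨m, hm, hmk⟩ : ∃ m : ℝ, 0 < m ∧ m ^ 2 = s ^ 2 - (a ^ 2 + b ^ 2) :=
    ⟨_, Real.sqrt_pos.2 hk, Real.sq_sqrt hk.le⟩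
  -- the integrand, in terms of `ρ - m`
  have hid : ∀ α, 2 * (1 + f₀ α) * (((1 + f₀ α) ^ 3 - m ^ 3) * (a * Real.cos α + b * Real.sin α))
      = (1 + f₀ α - m) ^ 2 * (((1 + f₀ α) ^ 2 + (1 + f₀ α) * m + m ^ 2) * (1 + f₀ α + m)) := by
    intro α
    have h := key α
    rw [← hmk] at h
    linear_combination (-((1 + f₀ α) ^ 3 - m ^ 3)) * h
  have hnn : ∀ α, 0 ≤ ((1 + f₀ α) ^ 3 - m ^ 3) * (a * Real.cos α + b * Real.sin α) := by
    intro α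
    have p := hρ α
    refine nonneg_of_mul_nonneg_right (a := 2 * (1 + f₀ α)) ?_ (by positivity)
    rw [hid]
    positivity
  have hint : ∫ α in (-Real.pi)..Real.pi,
      ((1 + f₀ α) ^ 3 - m ^ 3) * (a * Real.cos α + b * Real.sin α) = 0 := by
    have e : (fun α => ((1 + f₀ α) ^ 3 - m ^ 3) * (a * Real.cos α + b * Real.sin α))
        = fun α => (a * ((1 + f₀ α) ^ 3 * Real.cos α) + b * ((1 + f₀ α) ^ 3 * Real.sin α))
          - (m ^ 3 * a * Real.cos α + m ^ 3 * b * Real.sin α) := by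
      funext α; ring
    rw [e, intervalIntegral.integral_sub, intervalIntegral.integral_add,
      intervalIntegral.integral_add]
    · simp only [intervalIntegral.integral_const_mul, hcentroid₁, hcentroid₂, integral_cos,
        integral_sin]
      simp
    all_goals exact Continuous.intervalIntegrable (by fun_prop) _ _
  have hconst : ∀ α ∈ Set.Icc (-Real.pi) Real.pi, 1 + f₀ α = m := by
    intro α hα
    by_contra hne
    have p := hρ α
    have hpos : 0 < ((1 + f₀ α) ^ 3 - m ^ 3) * (a * Real.cos α + b * Real.sin α) := by
      refine pos_of_mul_pos_right (a := 2 * (1 + f₀ α)) ?_ (by positivity)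
      rw [hid]
      have : 1 + f₀ α - m ≠ 0 := sub_ne_zero.2 hne
      positivity
    have := intervalIntegral.integral_pos (a := -Real.pi) (b := Real.pi)
      (f := fun α => ((1 + f₀ α) ^ 3 - m ^ 3) * (a * Real.cos α + b * Real.sin α))
      (by linarith [Real.pi_pos]) (by fun_prop) (fun α _ => hnn α) ⟨α, hα, hpos⟩
    linarith
  have hpi := Real.pi_pos
  have ha0 : a = 0 := by
    have h := key 0
    rw [hconst 0 ⟨by linarith, by linarith⟩, ← hmk] at h
    simp only [Real.cos_zero, Real.sin_zero] at h
    have : m * a = 0 := by linarith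
    exact (mul_eq_zero.1 this).resolve_left hm.ne'
  have hb0 : b = 0 := by
    have h := key (Real.pi / 2)
    rw [hconst _ ⟨by linarith, by linarith⟩, ← hmk] at h
    simp only [Real.cos_pi_div_two, Real.sin_pi_div_two] at h
    have : m * b = 0 := by linarith
    exact (mul_eq_zero.1 this).resolve_left hm.ne'
  subst ha0 hb0
  have hall : ∀ α, 1 + f₀ α = s := by
    intro α
    have h := key α
    have p := hρ α
    exact (sq_eq_sq₀ p.le hs0.le).1 (by linarith)
  have hs1 : s = 1 := by
    simp only [hall, intervalIntegral.integral_const, smul_eq_mul] at harea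
    have : Real.pi * s ^ 2 = Real.pi * 1 := by linarith
    have := mul_left_cancel₀ hpi.ne' this
    exact (sq_eq_sq₀ hs0.le one_pos.le).1 (by linarith)
  subst hs1
  exact ⟨by simp, by simp, fun α => by linarith [hall α]⟩
end
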